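/- Let f(x) = x². The in-degrees of the q-Jaco graph are stepwise consecutive: for every k ∈ ℕ, d⁻(v_{k+1}) equals either d⁻(v_k) or d⁻(v_k) + 1. -/

import Mathlib

/-- In-degree of vertex `v_j` in the (root) Jaco graph with incidence function `f`:
`d⁻(v_j) = |{ i : 1 ≤ i < j, i + f i − d⁻(v_i) ≥ j }|`. -/
noncomputable def jacoIn (f : ℕ → ℕ) (j : ℕ) : ℕ :=
  Nat.strongRecOn j (fun j ih =>
    (((Finset.Ico 1 j).attach).filter (fun i : {x // x ∈ Finset.Ico 1 j} =>
      j ≤ i.1 + f i.1 - ih i.1 (Finset.mem_Ico.mp i.2).2)).card)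

/-- The arc `(v_i, v_j)` is present in the Jaco graph iff `1 ≤ i < j` and
`i + f i − d⁻(v_i) ≥ j`. -/
def jacoArc (f : ℕ → ℕ) (i j : ℕ) : Prop :=
  1 ≤ i ∧ i < j ∧ j ≤ i + f i - jacoIn f i

noncomputable instance (f : ℕ → ℕ) (i j : ℕ) : Decidable (jacoArc f i j) := by
  unfold jacoArc; infer_instance

/-- The underlying undirected simple graph `J*_n(f)` of the finite Jaco graph `J_n(f)`,
on vertex set `{v_1, …, v_n}` (vertex `x : Fin n` represents `v_{x+1}`). -/
def jacoGraph (f : ℕ → ℕ) (n : ℕ) : SimpleGraph (Fin n) :=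
  SimpleGraph.fromRel (fun x y => jacoArc f (x.1 + 1) (y.1 + 1))

noncomputable instance (f : ℕ → ℕ) (n : ℕ) : DecidableRel (jacoGraph f n).Adj := fun x y =>
  decidable_of_iff
    (x ≠ y ∧ (jacoArc f (x.1 + 1) (y.1 + 1) ∨ jacoArc f (y.1 + 1) (x.1 + 1)))
    (by unfold jacoGraph; exact (SimpleGraph.fromRel_adj (fun a b : Fin n => jacoArc f (a.1 + 1) (b.1 + 1)) x y).symm)

/-!
Let `r i = i + f i - d⁻(v_i)`, so that the out-neighbours of `v_i` are the `v_j` with `i < j ≤ r i`.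
If `f` is strictly increasing, then `d⁻(v_k) ≤ k - 1 ≤ f k`, that is, `k ≤ r k`. Hence the
in-neighbours of `v_{k+1}` are those of `v_k` together with `v_k` if `r k > k`, minus the `v_i`
with `i < k` and `r i = k`, and in either case
`d⁻(v_{k+1}) + #{i ≤ k | r i = k} = d⁻(v_k) + 1`. So the in-degree grows by at most one per step,
which makes `r` strictly increasing along with `f`. Hence at most one `i` has `r i = k`, and the
in-degree never drops.
-/

section

open Finset

/-- The reach `i + f i - d⁻(v_i)` of the vertex `v_i` in the Jaco graph: the out-neighbours of `v_i`
are the `v_j` with `i < j ≤ jacoReach f i`. As `d⁻(v_i) < i` for `1 ≤ i`, the truncated subtraction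
is exact. -/
noncomputable def jacoReach (f : ℕ → ℕ) (i : ℕ) : ℕ :=
  i + f i - jacoIn f i

variable {f : ℕ → ℕ} {k : ℕ}

theorem jacoIn_eq_card_filter (f : ℕ → ℕ) (j : ℕ) :
    jacoIn f j = #{i ∈ Ico 1 j | j ≤ jacoReach f i} := by
  have unfold_once : jacoIn f j = #{i ∈ (Ico 1 j).attach | j ≤ jacoReach f i.1} := by
    conv_lhs => rw [jacoIn, Nat.strongRecOn_eq]
    rfl
  rw [unfold_once, filter_attach (fun i => j ≤ jacoReach f i), card_map, card_attach]

theorem jacoIn_le_sub_one (f : ℕ → ℕ) (j : ℕ) : jacoIn f j ≤ j - 1 := by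
  rw [jacoIn_eq_card_filter, ← Nat.card_Ico 1 j]
  exact card_filter_le _ _

theorem jacoIn_succ_add_card_jacoReach_eq (hk : 1 ≤ k) (hreach : k ≤ jacoReach f k) :
    jacoIn f (k + 1) + #{i ∈ Ico 1 (k + 1) | jacoReach f i = k} = jacoIn f k + 1 := by
  have card_reach_ge : #{i ∈ Ico 1 (k + 1) | k ≤ jacoReach f i} = jacoIn f k + 1 := by
    rw [← insert_Ico_right_eq_Ico_add_one hk, filter_insert, if_pos hreach,
      card_insert_of_notMem (by simp), jacoIn_eq_card_filter f k]
  have disjoint_reach : Disjoint {i ∈ Ico 1 (k + 1) | k + 1 ≤ jacoReach f i}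
      {i ∈ Ico 1 (k + 1) | jacoReach f i = k} :=
    disjoint_filter.2 fun _ _ hlt heq => by omega
  rw [← card_reach_ge, jacoIn_eq_card_filter f (k + 1), ← card_union_of_disjoint disjoint_reach,
    ← filter_or]
  congr! 2
  omega

theorem jacoIn_le_of_strictMonoOn (hf : StrictMonoOn f (Set.Ici 1)) (hk : 1 ≤ k) :
    jacoIn f k ≤ f k := by
  obtain ⟨n, rfl⟩ := Nat.exists_eq_add_of_le' hk
  have f_shift_strictMono : StrictMono fun m => f (m + 1) := fun a b hab =>
    hf (Nat.le_add_left 1 a) (Nat.le_add_left 1 b) (Nat.add_lt_add_right hab 1)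
  exact (jacoIn_le_sub_one f (n + 1)).trans f_shift_strictMono.le_apply

theorem le_jacoReach_of_strictMonoOn (hf : StrictMonoOn f (Set.Ici 1)) (hk : 1 ≤ k) :
    k ≤ jacoReach f k := by
  have := jacoIn_le_of_strictMonoOn hf hk
  unfold jacoReach
  omega

theorem jacoReach_strictMonoOn (hf : StrictMonoOn f (Set.Ici 1)) :
    StrictMonoOn (jacoReach f) (Set.Ici 1) := by
  refine strictMonoOn_of_lt_add_one Set.ordConnected_Ici fun k _ hk hk' => ?_
  have f_lt : f k < f (k + 1) := hf hk hk' k.lt_succ_self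
  have in_le : jacoIn f k ≤ f k := jacoIn_le_of_strictMonoOn hf hk
  have step := jacoIn_succ_add_card_jacoReach_eq hk (le_jacoReach_of_strictMonoOn hf hk)
  unfold jacoReach at step ⊢
  omega

theorem card_jacoReach_eq_le_one (hf : StrictMonoOn f (Set.Ici 1)) (j k : ℕ) :
    #{i ∈ Ico 1 j | jacoReach f i = k} ≤ 1 := by
  simp only [card_le_one, mem_filter, mem_Ico]
  rintro a ⟨ha, rfl⟩ b ⟨hb, hab⟩
  exact (jacoReach_strictMonoOn hf).injOn ha.1 hb.1 hab.symm

end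

theorem qJaco_sq_indegrees_stepwise_general {f : ℕ → ℕ} {k : ℕ}
    (hf : StrictMonoOn f (Set.Ici 1)) (hk : 1 ≤ k) :
    jacoIn f (k + 1) = jacoIn f k ∨ jacoIn f (k + 1) = jacoIn f k + 1 := by
  have step := jacoIn_succ_add_card_jacoReach_eq hk (le_jacoReach_of_strictMonoOn hf hk)
  have dropped_le_one := card_jacoReach_eq_le_one hf (k + 1) k
  omega

/-- For `f(x) = x²`, the in-degrees of the q-Jaco graph are stepwise
consecutive: for every `k ∈ ℕ` (`k ≥ 1`), `d⁻(v_{k+1})` equals `d⁻(v_k)` or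
`d⁻(v_k) + 1`. -/
theorem qJaco_sq_indegrees_stepwise (k : ℕ) (hk : 1 ≤ k) :
    jacoIn (fun x => x ^ 2) (k + 1) = jacoIn (fun x => x ^ 2) k ∨
    jacoIn (fun x => x ^ 2) (k + 1) = jacoIn (fun x => x ^ 2) k + 1 :=
  qJaco_sq_indegrees_stepwise_general ((Nat.pow_left_strictMono two_ne_zero).strictMonoOn _) hk
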